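/- Let I ⊂ ℂ[u₁,…,uₘ] be a zero-dimensional ideal with quotient ring A = ℂ[u₁,…,uₘ]/I, and let c₁,…,cₘ ∈ ℂ. For every point s = (s₁,…,sₘ) ∈ V(I), the scalar c₁s₁ + ⋯ + cₘsₘ is an eigenvalue of the linear combination M = c₁·m_{u₁} + ⋯ + cₘ·m_{uₘ} of the companion operators; moreover, any common eigenvector v of the m_{uᵢ} with m_{uᵢ} v = sᵢ·v satisfies M v = (c₁s₁ + ⋯ + cₘsₘ)·v. -/

import Mathlib

/-!
Evaluation at `s ∈ V(I)` descends to a character `A → ℂ`. For any character `φ` and any `a ∈ A`,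
the element `φ(a) - a` lies in the kernel of `φ`, so it is not invertible and `φ(a)` belongs to the
spectrum of `a`, which is also the spectrum of multiplication by `a`. As `A` is finite-dimensional,
points of the spectrum are eigenvalues. Finally `∑ cᵢ m_{uᵢ}` is multiplication by the polynomial
`∑ cᵢ uᵢ`, whose value at `s` is `∑ cᵢ sᵢ`.
-/

/-- The multiplication endomorphism `m_h` of `A = ℂ[u₁,…,uₘ]/I`,
sending `p + I` to `h·p + I`. -/
noncomputable def mulMap {m : ℕ}
    (I : Ideal (MvPolynomial (Fin m) ℂ)) (h : MvPolynomial (Fin m) ℂ) :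
    Module.End ℂ (MvPolynomial (Fin m) ℂ ⧸ I) :=
  LinearMap.mulLeft ℂ (Ideal.Quotient.mk I h)

theorem mulMap_sum_smul {m : ℕ} {ι : Type*} (I : Ideal (MvPolynomial (Fin m) ℂ)) (t : Finset ι)
    (c : ι → ℂ) (h : ι → MvPolynomial (Fin m) ℂ) :
    mulMap I (∑ i ∈ t, c i • h i) = ∑ i ∈ t, c i • mulMap I (h i) := by
  let L : MvPolynomial (Fin m) ℂ →ₗ[ℂ] Module.End ℂ (MvPolynomial (Fin m) ℂ ⧸ I) :=
    LinearMap.mul ℂ _ ∘ₗ (Ideal.Quotient.mkₐ ℂ I).toLinearMap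
  have hL (p : MvPolynomial (Fin m) ℂ) : mulMap I p = L p := rfl
  simp only [hL, map_sum, map_smul]

theorem eval_sum_smul_X {R σ : Type*} [CommSemiring R] (t : Finset σ) (c s : σ → R) :
    MvPolynomial.eval s (∑ i ∈ t, c i • MvPolynomial.X i) = ∑ i ∈ t, c i * s i := by
  simp only [map_sum, MvPolynomial.smul_eval, MvPolynomial.eval_X]

theorem spectrum_mulLeft {R A : Type*} [CommRing R] [Ring A] [Algebra R A] (a : A) :
    spectrum R (LinearMap.mulLeft R a) = spectrum R a := by
  change spectrum R (Algebra.lmul R A a) = spectrum R a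
  ext r
  rw [spectrum.mem_iff, spectrum.mem_iff, ← (Algebra.lmul R A).commutes, ← map_sub,
    Algebra.lmul_isUnit_iff]

theorem hasEigenvalue_mulLeft_algHom_apply {K A : Type*} [Field K] [Ring A] [Algebra K A]
    [FiniteDimensional K A] (φ : A →ₐ[K] K) (a : A) :
    Module.End.HasEigenvalue (LinearMap.mulLeft K a) (φ a) := by
  rw [Module.End.hasEigenvalue_iff_mem_spectrum, spectrum_mulLeft]
  exact AlgHom.apply_mem_spectrum φ a

theorem smul_eq_eval_smul_of_X_smul {R σ M : Type*} [CommSemiring R] [AddCommMonoid M] [Module R M]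
    [Module (MvPolynomial σ R) M] [IsScalarTower R (MvPolynomial σ R) M] {s : σ → R} {v : M}
    (hv : ∀ i, (MvPolynomial.X i : MvPolynomial σ R) • v = s i • v) (p : MvPolynomial σ R) :
    p • v = MvPolynomial.eval s p • v := by
  induction p using MvPolynomial.induction_on with
  | C r => rw [MvPolynomial.eval_C, ← MvPolynomial.algebraMap_eq, algebraMap_smul]
  | add p q hp hq => rw [add_smul, hp, hq, map_add, add_smul]
  | mul_X p i hp =>
    rw [mul_smul, hv, smul_algebra_smul_comm, hp, map_mul, MvPolynomial.eval_X, smul_smul, mul_comm]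

theorem linear_combination_companion_eigenvalue_general {K σ : Type*} [Field K]
    (I : Ideal (MvPolynomial σ K)) [FiniteDimensional K (MvPolynomial σ K ⧸ I)]
    (h : MvPolynomial σ K) (s : σ → K) (hs : ∀ f ∈ I, MvPolynomial.eval s f = 0) :
    Module.End.HasEigenvalue (LinearMap.mulLeft K (Ideal.Quotient.mk I h))
        (MvPolynomial.eval s h) ∧
    ∀ v : MvPolynomial σ K ⧸ I,
      (∀ i, LinearMap.mulLeft K (Ideal.Quotient.mk I (MvPolynomial.X i)) v = s i • v) →
      LinearMap.mulLeft K (Ideal.Quotient.mk I h) v = MvPolynomial.eval s h • v :=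
  ⟨hasEigenvalue_mulLeft_algHom_apply
      (Ideal.Quotient.liftₐ I (MvPolynomial.aeval s) hs) (Ideal.Quotient.mk I h),
    fun _ hv ↦ smul_eq_eval_smul_of_X_smul hv h⟩

/-- for `s ∈ V(I)` (with `I` zero-dimensional), the scalar
`c₁s₁ + ⋯ + cₘsₘ` is an eigenvalue of `M = c₁·m_{u₁} + ⋯ + cₘ·m_{uₘ}`, and any
common eigenvector `v` with `m_{uᵢ} v = sᵢ·v` satisfies `M v = (Σᵢ cᵢsᵢ)·v`. -/
theorem linear_combination_companion_eigenvalue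
    (m : ℕ) (I : Ideal (MvPolynomial (Fin m) ℂ))
    [FiniteDimensional ℂ (MvPolynomial (Fin m) ℂ ⧸ I)]
    (c : Fin m → ℂ) (s : Fin m → ℂ)
    (hs : ∀ f ∈ I, MvPolynomial.eval s f = 0) :
    Module.End.HasEigenvalue (∑ i : Fin m, c i • mulMap I (MvPolynomial.X i))
        (∑ i : Fin m, c i * s i) ∧
    ∀ v : MvPolynomial (Fin m) ℂ ⧸ I,
      (∀ i : Fin m, mulMap I (MvPolynomial.X i) v = s i • v) →
      (∑ i : Fin m, c i • mulMap I (MvPolynomial.X i)) v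
        = (∑ i : Fin m, c i * s i) • v := by
  rw [← mulMap_sum_smul, ← eval_sum_smul_X]
  exact linear_combination_companion_eigenvalue_general I (∑ i, c i • MvPolynomial.X i) s hs
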